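/- Let p be an odd prime and α ∈ ℚ_p a quadratic irrational whose BCF complete quotients admit a representation α_n = (b_n + δ)/(p^{k_n} c_n) with b_n, c_n, k_n ∈ ℤ, c_n ≠ 0, p ∤ c_n, where δ ∈ ℚ_p and δ² = Δ is a non-square integer with Δ > 0. Set t = ⌊√Δ⌋ and K = (2t+1)Δ + 1 − t(t+1)(2t+1)/3. If there exists n_0 > 0 such that (b_n² − Δ)(b_{n+1}² − Δ) < 0 for every n with n_0 ≤ n ≤ n_0 + 2K (i.e., the norms of the real embeddings of consecutive complete quotients have alternating signs on this range), then the BCF expansion of α is periodic with period length at most 2K: there exist m ≥ 0 and 1 ≤ N ≤ 2K with α_{m+N} = α_m. -/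

import Mathlib

/-- `y ∈ 𝒴 = ℤ[1/p] ∩ (−p/2, p/2)`: a possible Browkin partial quotient. -/
def IsBrowkinDigit (p : ℕ) (y : ℚ) : Prop :=
  (∃ z : ℤ, ∃ j : ℕ, y = (z : ℚ) / (p : ℚ) ^ j) ∧
  -(p : ℚ) / 2 < y ∧ y < (p : ℚ) / 2

/-- `αs` is the sequence of complete quotients and `a` the sequence of partial
quotients of the (non-terminating) Browkin continued fraction algorithm:
`a n = s (αs n)` (i.e. `a n ∈ 𝒴` and `|αs n − a n|_p < 1`) and
`αs (n+1) = 1/(αs n − a n)`. -/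
def IsBCF (p : ℕ) [Fact p.Prime] (αs : ℕ → ℚ_[p]) (a : ℕ → ℚ) : Prop :=
  ∀ n, IsBrowkinDigit p (a n) ∧ ‖αs n - (a n : ℚ_[p])‖ < 1 ∧
    αs (n + 1) = (αs n - (a n : ℚ_[p]))⁻¹

/-!
Write `C n = p ^ k n * c n`, so that the `n`-th complete quotient is `(b n + δ) / C n`. Since `δ` is
irrational, one step of the algorithm forces `C n * C (n + 1) = Δ - b (n + 1) ^ 2`. For `n ≥ 1` the
complete quotient has `p`-adic norm `> 1` while its numerator has norm `≤ 1`, so `C n` is a nonzero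
integer divisible by `p`, and in particular `|C n| ≥ 2`. Alternating signs make `b n ^ 2 < Δ` for
every other index `n`, and at such an index `|C n| ≤ (Δ - b n ^ 2) / 2`. So at most `Δ - b ^ 2`
values of `C n` can accompany a given `b n = b`, hence at most `∑ |b| ≤ t, (Δ - b ^ 2) = K - 1`
pairs `(b n, C n)` occur at these indices, and two of any `K` of them coincide.
-/

theorem three_mul_sum_Icc_neg_sq (n : ℕ) :
    3 * ∑ x ∈ Finset.Icc (-(n : ℤ)) n, x ^ 2 = n * (n + 1) * (2 * n + 1) := by
  induction n with
  | zero => simp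
  | succ n ih =>
    rw [Nat.cast_succ, Finset.sum_Icc_succ_eq_add_endpoints, mul_add, ih]
    ring

theorem sum_Icc_neg_sub_sq (Δ : ℤ) (n : ℕ) :
    ∑ x ∈ Finset.Icc (-(n : ℤ)) n, (Δ - x ^ 2) =
      (2 * n + 1) * Δ - n * (n + 1) * (2 * n + 1) / 3 := by
  have hcard : ((n : ℤ) + 1 - -(n : ℤ)).toNat = 2 * n + 1 := by omega
  rw [← three_mul_sum_Icc_neg_sq, Int.mul_ediv_cancel_left _ three_ne_zero,
    Finset.sum_sub_distrib, Finset.sum_const, Int.card_Icc, hcard, nsmul_eq_mul]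
  push_cast
  rfl

/-- The pairs `(b, C)` of integers with `C ≠ 0` and `2 * |C| ≤ Δ - b ^ 2`, fibred over `b`: the
candidates for a complete quotient `(b + δ) / C` of negative norm. The factor `2` is the lower bound
for the absolute value of the preceding denominator. -/
noncomputable def negNormPairs (Δ : ℤ) : Finset (Σ _ : ℤ, ℤ) :=
  (Finset.Icc (-Int.sqrt Δ) (Int.sqrt Δ)).sigma fun b =>
    (Finset.Icc (-((Δ - b ^ 2) / 2)) ((Δ - b ^ 2) / 2)).erase 0

theorem mem_negNormPairs {Δ b C : ℤ} (hΔ : 0 ≤ Δ) :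
    ⟨b, C⟩ ∈ negNormPairs Δ ↔ C ≠ 0 ∧ 2 * |C| ≤ Δ - b ^ 2 := by
  simp only [negNormPairs, Finset.mem_sigma, Finset.mem_erase, Finset.mem_Icc, ← abs_le,
    Int.abs_le_sqrt_iff_sq_le hΔ]
  constructor
  · rintro ⟨-, hC, hle⟩
    exact ⟨hC, by omega⟩
  · rintro ⟨hC, hle⟩
    exact ⟨by linarith [abs_nonneg C], hC, by omega⟩

theorem card_negNormPairs_le {Δ : ℤ} (hΔ : 0 ≤ Δ) :
    ((negNormPairs Δ).card : ℤ) ≤ (2 * Int.sqrt Δ + 1) * Δ -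
      Int.sqrt Δ * (Int.sqrt Δ + 1) * (2 * Int.sqrt Δ + 1) / 3 := by
  have hfibre : ∀ b ∈ Finset.Icc (-Int.sqrt Δ) (Int.sqrt Δ),
      (((Finset.Icc (-((Δ - b ^ 2) / 2)) ((Δ - b ^ 2) / 2)).erase 0).card : ℤ) ≤ Δ - b ^ 2 := by
    intro b hb
    have hsq : b ^ 2 ≤ Δ := by
      rwa [Finset.mem_Icc, ← abs_le, Int.abs_le_sqrt_iff_sq_le hΔ] at hb
    rw [Finset.card_erase_of_mem (Finset.mem_Icc.mpr (by omega)), Int.card_Icc]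
    omega
  calc ((negNormPairs Δ).card : ℤ)
      ≤ ∑ b ∈ Finset.Icc (-Int.sqrt Δ) (Int.sqrt Δ), (Δ - b ^ 2) := by
        rw [negNormPairs, Finset.card_sigma, Nat.cast_sum]
        exact Finset.sum_le_sum hfibre
    _ = _ := sum_Icc_neg_sub_sq Δ (Nat.sqrt Δ.toNat)

theorem mem_negNormPairs_of_mul_eq {Δ b C C' : ℤ} (hb : b ^ 2 < Δ) (hC : 2 ≤ |C|)
    (h : C * C' = Δ - b ^ 2) : ⟨b, C'⟩ ∈ negNormPairs Δ := by
  have habs : |C| * |C'| = Δ - b ^ 2 := by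
    rw [← abs_mul, h, abs_of_pos (sub_pos.mpr hb)]
  refine (mem_negNormPairs ((sq_nonneg b).trans hb.le)).mpr ⟨?_, ?_⟩
  · rintro rfl
    linarith
  · exact habs ▸ mul_le_mul_of_nonneg_right hC (abs_nonneg C')

theorem lt_iff_not_lt_of_sub_mul_sub_neg {R : Type*} [Ring R] [LinearOrder R]
    [IsStrictOrderedRing R] {x y z : R} (h : (x - z) * (y - z) < 0) : y < z ↔ ¬x < z := by
  rw [not_lt]
  rcases mul_neg_iff.mp h with ⟨hx, hy⟩ | ⟨hx, hy⟩
  · exact iff_of_true (sub_neg.mp hy) (sub_pos.mp hx).le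
  · exact iff_of_false (sub_pos.mp hy).not_gt (sub_neg.mp hx).not_ge

theorem exists_repeat_of_alternating {β : Type*} {f : ℕ → β} {P : ℕ → Prop} {S : Finset β}
    {K : ℕ} (hK : S.card < K) (hmem : ∀ i, P i → f i ∈ S)
    (halt : ∀ i, i + 1 < 2 * K → (P (i + 1) ↔ ¬P i)) :
    ∃ m N, 1 ≤ N ∧ N < 2 * K ∧ f (m + N) = f m := by
  obtain ⟨s, hs, hPs⟩ : ∃ s < 2, P s := by
    by_cases h : P 0
    · exact ⟨0, by omega, h⟩
    · exact ⟨1, by omega, (halt 0 (by omega)).mpr h⟩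
  have hP : ∀ i < K, P (s + 2 * i) := by
    intro i
    induction i with
    | zero => exact fun _ => hPs
    | succ i ih =>
      intro _
      refine (halt (s + 2 * i + 1) (by omega)).mpr fun hodd => ?_
      exact (halt (s + 2 * i) (by omega)).mp hodd (ih (by omega))
  obtain ⟨i, j, hj, hij, hf⟩ : ∃ i, ∃ j < K, i < j ∧ f (s + 2 * i) = f (s + 2 * j) := by
    have hmaps : Set.MapsTo (fun i => f (s + 2 * i)) (Finset.range K) S :=
      fun i hi => hmem _ (hP i (Finset.mem_range.mp hi))
    obtain ⟨i, hi, j, hj, hne, hf⟩ :=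
      Finset.exists_ne_map_eq_of_card_lt_of_maps_to (by rwa [Finset.card_range]) hmaps
    rw [Finset.mem_range] at hi hj
    rcases hne.lt_or_gt with hlt | hgt
    · exact ⟨i, j, hj, hlt, hf⟩
    · exact ⟨j, i, hi, hgt, hf.symm⟩
  refine ⟨s + 2 * i, 2 * (j - i), by omega, by omega, ?_⟩
  rw [hf]
  congr 1
  omega

section QuadraticIrrational

variable {F : Type*} [Field F] [CharZero F] {δ : F}

theorem ne_ratCast_of_sq_eq_intCast {Δ : ℤ} (hδ : δ ^ 2 = Δ) (hΔ : ¬IsSquare Δ) (q : ℚ) :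
    δ ≠ q := by
  rintro rfl
  have hq : (Δ : ℚ) = q * q := by rw [← sq]; exact_mod_cast hδ.symm
  exact hΔ (Rat.isSquare_intCast_iff.mp ⟨q, hq⟩)

theorem eq_zero_of_ratCast_add_ratCast_mul_eq_zero (hδ : ∀ q : ℚ, δ ≠ q) {x y : ℚ}
    (h : (x : F) + y * δ = 0) : x = 0 ∧ y = 0 := by
  have hy : y = 0 := by
    by_contra hy
    have hyF : (y : F) ≠ 0 := Rat.cast_ne_zero.mpr hy
    refine hδ (-x / y) ?_
    push_cast
    rw [eq_div_iff hyF]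
    linear_combination h
  exact ⟨by simpa [hy] using h, hy⟩

theorem add_div_ne_ratCast (hδ : ∀ q : ℚ, δ ≠ q) {b C : ℚ} (hC : C ≠ 0) (q : ℚ) :
    ((b : F) + δ) / C ≠ q := by
  intro h
  rw [div_eq_iff (Rat.cast_ne_zero.mpr hC)] at h
  have hlin : ((b - q * C : ℚ) : F) + (1 : ℚ) * δ = 0 := by
    push_cast
    linear_combination h
  exact one_ne_zero (eq_zero_of_ratCast_add_ratCast_mul_eq_zero hδ hlin).2

theorem mul_denominators_eq_sub_sq {Δ b b' C C' a : ℚ} (hδ : δ ^ 2 = Δ)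
    (hirr : ∀ q : ℚ, δ ≠ q) (hC : C ≠ 0) (hC' : C' ≠ 0)
    (h : ((b' : F) + δ) / C' = (((b : F) + δ) / C - a)⁻¹) : C * C' = Δ - b' ^ 2 := by
  have hCF : (C : F) ≠ 0 := Rat.cast_ne_zero.mpr hC
  have hCF' : (C' : F) ≠ 0 := Rat.cast_ne_zero.mpr hC'
  have hsub : ((b : F) + δ) / C - a ≠ 0 := sub_ne_zero.mpr (add_div_ne_ratCast hirr hC a)
  have hcross : ((b' : F) + δ) * (b + δ - a * C) = C * C' := by
    have hmul := (eq_mul_inv_iff_mul_eq₀ hsub).mp (h.trans (one_mul _).symm)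
    field_simp at hmul
    linear_combination hmul
  have hlin : ((b' * (b - a * C) + Δ - C * C' : ℚ) : F) + (b + b' - a * C : ℚ) * δ = 0 := by
    push_cast
    linear_combination hcross - hδ
  obtain ⟨hrat, hsum⟩ := eq_zero_of_ratCast_add_ratCast_mul_eq_zero hirr hlin
  linear_combination b' * hsum - hrat

end QuadraticIrrational

section Denominators

variable {p : ℕ} [Fact p.Prime]

theorem norm_intCast_add_le_one_of_sq_eq_intCast {δ : ℚ_[p]} {Δ : ℤ} (hδ : δ ^ 2 = Δ) (b : ℤ) :
    ‖(b : ℚ_[p]) + δ‖ ≤ 1 := by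
  have hδ1 : ‖δ‖ ≤ 1 := by
    rw [← pow_le_one_iff_of_nonneg (norm_nonneg δ) two_ne_zero, ← norm_pow, hδ]
    exact Padic.norm_int_le_one Δ
  exact (Padic.nonarchimedean _ _).trans (max_le (Padic.norm_int_le_one b) hδ1)

theorem exists_intCast_eq_zpow_mul_of_norm_le_one {k c : ℤ}
    (h : ‖(p : ℚ_[p]) ^ k * c‖ ≤ 1) : ∃ C : ℤ, (C : ℚ_[p]) = (p : ℚ_[p]) ^ k * c := by
  have hp : (p : ℚ_[p]) ≠ 0 := Nat.cast_ne_zero.mpr (Fact.out : p.Prime).ne_zero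
  obtain ⟨m, rfl | rfl⟩ := k.eq_nat_or_neg
  · exact ⟨p ^ m * c, by push_cast; rw [zpow_natCast]⟩
  · have hdvd : (p ^ m : ℤ) ∣ c := by
      rw [← Padic.norm_int_le_pow_iff_dvd]
      have hp0 : (0 : ℝ) < (p : ℝ) ^ m := pow_pos (by exact_mod_cast (Fact.out : p.Prime).pos) m
      rwa [norm_mul, Padic.norm_p_zpow, neg_neg, zpow_natCast, ← le_div_iff₀' hp0, one_div,
        ← zpow_natCast, ← zpow_neg] at h
    obtain ⟨d, rfl⟩ := hdvd
    refine ⟨d, ?_⟩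
    push_cast
    rw [zpow_neg, zpow_natCast, inv_mul_cancel_left₀ (pow_ne_zero m hp)]

theorem exists_two_le_abs_intCast_eq_zpow_mul {x : ℚ_[p]} (hx : ‖x‖ ≤ 1) {k c : ℤ} (hc : c ≠ 0)
    (h : 1 < ‖x / ((p : ℚ_[p]) ^ k * c)‖) :
    ∃ C : ℤ, 2 ≤ |C| ∧ (C : ℚ_[p]) = (p : ℚ_[p]) ^ k * c := by
  have hp : p.Prime := Fact.out
  have hne : (p : ℚ_[p]) ^ k * c ≠ 0 :=
    mul_ne_zero (zpow_ne_zero k (Nat.cast_ne_zero.mpr hp.ne_zero)) (Int.cast_ne_zero.mpr hc)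
  have hnorm : ‖(p : ℚ_[p]) ^ k * c‖ < 1 := by
    rw [norm_div, one_lt_div (norm_pos_iff.mpr hne)] at h
    exact h.trans_le hx
  obtain ⟨C, hC⟩ := exists_intCast_eq_zpow_mul_of_norm_le_one hnorm.le
  refine ⟨C, ?_, hC⟩
  rw [← hC] at hne hnorm
  have hC0 : 0 < |C| := abs_pos.mpr (Int.cast_ne_zero.mp hne)
  have hpC : (p : ℤ) ≤ |C| :=
    Int.le_of_dvd hC0 ((dvd_abs _ _).mpr (Padic.norm_intCast_lt_one_iff.mp hnorm))
  exact (by exact_mod_cast hp.two_le : (2 : ℤ) ≤ p).trans hpC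

end Denominators

/-- `αs` and `a` are the complete and the partial quotients of a non-terminating `p`-adic continued
fraction: the `a n` are any rationals with `‖αs n - a n‖ < 1`. Browkin's and Ruban's algorithms are
two ways of choosing them. -/
def IsPadicCF {p : ℕ} [Fact p.Prime] (αs : ℕ → ℚ_[p]) (a : ℕ → ℚ) : Prop :=
  ∀ n, ‖αs n - a n‖ < 1 ∧ αs (n + 1) = (αs n - a n)⁻¹

section CompleteQuotients

variable {p : ℕ} [Fact p.Prime] {αs : ℕ → ℚ_[p]} {a : ℕ → ℚ} {δ : ℚ_[p]} {Δ : ℤ} {b : ℕ → ℤ}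

theorem IsBCF.isPadicCF (h : IsBCF p αs a) : IsPadicCF αs a := fun n => (h n).2

theorem IsPadicCF.one_lt_norm_succ (hcf : IsPadicCF αs a) {n : ℕ} (hne : αs n ≠ a n) :
    1 < ‖αs (n + 1)‖ := by
  rw [(hcf n).2, norm_inv]
  exact (one_lt_inv₀ (norm_pos_iff.mpr (sub_ne_zero.mpr hne))).mpr (hcf n).1

theorem IsPadicCF.exists_int_denominators (hcf : IsPadicCF αs a) (hδ : δ ^ 2 = Δ)
    (hΔ : ¬IsSquare Δ) {c k : ℕ → ℤ}
    (hrep : ∀ n, c n ≠ 0 ∧ αs n = (b n + δ) / ((p : ℚ_[p]) ^ k n * c n)) :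
    ∃ C : ℕ → ℤ, ∀ n, 2 ≤ |C n| ∧ αs (n + 1) = (b (n + 1) + δ) / C n := by
  have hne : ∀ n, αs n ≠ a n := by
    intro n
    have hC : (p : ℚ) ^ k n * c n ≠ 0 :=
      mul_ne_zero (zpow_ne_zero _ (Nat.cast_ne_zero.mpr (Fact.out : p.Prime).ne_zero))
        (Int.cast_ne_zero.mpr (hrep n).1)
    have hquot := add_div_ne_ratCast (ne_ratCast_of_sq_eq_intCast hδ hΔ) (b := b n) hC (a n)
    push_cast at hquot
    rwa [(hrep n).2]
  have hint : ∀ n, ∃ C : ℤ, 2 ≤ |C| ∧ αs (n + 1) = (b (n + 1) + δ) / C := by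
    intro n
    have hlt := hcf.one_lt_norm_succ (hne n)
    rw [(hrep (n + 1)).2] at hlt ⊢
    obtain ⟨C, hC2, hC⟩ := exists_two_le_abs_intCast_eq_zpow_mul
      (norm_intCast_add_le_one_of_sq_eq_intCast hδ (b (n + 1))) (hrep (n + 1)).1 hlt
    exact ⟨C, hC2, by rw [hC]⟩
  exact Classical.skolem.mp hint

theorem int_denominators_mul_succ (hstep : ∀ n, αs (n + 1) = (αs n - a n)⁻¹)
    (hδ : δ ^ 2 = Δ) (hΔ : ¬IsSquare Δ) {C : ℕ → ℤ} (hC : ∀ n, C n ≠ 0)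
    (hα : ∀ n, αs (n + 1) = (b (n + 1) + δ) / C n) (n : ℕ) :
    C n * C (n + 1) = Δ - b (n + 2) ^ 2 := by
  have hC' : ∀ n, (C n : ℚ) ≠ 0 := fun n => Int.cast_ne_zero.mpr (hC n)
  have h := hstep (n + 1)
  rw [hα, hα] at h
  exact_mod_cast mul_denominators_eq_sub_sq (Δ := Δ) (b := b (n + 1)) (b' := b (n + 2))
    (by exact_mod_cast hδ) (ne_ratCast_of_sq_eq_intCast hδ hΔ) (hC' n) (hC' (n + 1))
    (by exact_mod_cast h)

end CompleteQuotients

theorem browkin_periodic_of_alternating_norms_general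
    (p : ℕ) [Fact p.Prime] (αs : ℕ → ℚ_[p]) (a : ℕ → ℚ) (hcf : IsPadicCF αs a)
    (δ : ℚ_[p]) (Δ : ℤ) (hδ : δ ^ 2 = (Δ : ℚ_[p])) (hΔ : ¬IsSquare Δ)
    (b c : ℕ → ℤ) (kk : ℕ → ℤ)
    (hrep : ∀ n, c n ≠ 0 ∧
      αs n = ((b n : ℚ_[p]) + δ) / ((p : ℚ_[p]) ^ (kk n) * (c n : ℚ_[p])))
    (hΔpos : 0 < Δ) (t K : ℤ) (ht : t = Int.sqrt Δ)
    (hK : K = (2 * t + 1) * Δ + 1 - t * (t + 1) * (2 * t + 1) / 3) (n0 : ℕ)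
    (halt : ∀ n : ℕ, n0 ≤ n → (n : ℤ) ≤ (n0 : ℤ) + 2 * K →
      ((b n) ^ 2 - Δ) * ((b (n + 1)) ^ 2 - Δ) < 0) :
    ∃ m N : ℕ, 1 ≤ N ∧ (N : ℤ) ≤ 2 * K ∧ αs (m + N) = αs m := by
  obtain ⟨C, hC⟩ := hcf.exists_int_denominators hδ hΔ hrep
  have hC0 : ∀ n, C n ≠ 0 := fun n => abs_pos.mp (two_pos.trans_le (hC n).1)
  have hmul := int_denominators_mul_succ (fun n => (hcf n).2) hδ hΔ hC0 fun n => (hC n).2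
  have hcard : ((negNormPairs Δ).card : ℤ) < K := by
    have := card_negNormPairs_le hΔpos.le
    rw [hK, ht]
    linarith
  obtain ⟨m, N, hN, hNK, hrepeat⟩ := exists_repeat_of_alternating
    (f := fun i => (⟨b (n0 + i + 2), C (n0 + i + 1)⟩ : Σ _ : ℤ, ℤ))
    (P := fun i => b (n0 + i + 2) ^ 2 < Δ) (K := K.toNat) (by omega)
    (fun i hi => mem_negNormPairs_of_mul_eq hi (hC (n0 + i)).1 (hmul (n0 + i)))
    (fun i hi => lt_iff_not_lt_of_sub_mul_sub_neg (halt (n0 + i + 2) (by omega) (by omega)))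
  obtain ⟨hb, hCeq⟩ := Sigma.mk.inj_iff.mp hrepeat
  refine ⟨n0 + m + 2, N, hN, by omega, ?_⟩
  rw [show n0 + m + 2 + N = n0 + (m + N) + 2 by ring, (hC _).2, (hC _).2, hb, eq_of_heq hCeq]

/-- with `t = ⌊√Δ⌋` and `K = (2t+1)Δ + 1 − t(t+1)(2t+1)/3`, if the
norms of the real embeddings of consecutive complete quotients have alternating
signs (`(b_n² − Δ)(b_{n+1}² − Δ) < 0`) for every `n` with `n₀ ≤ n ≤ n₀ + 2K`,
then the BCF expansion of `α` is periodic with period length at most `2K`. -/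
theorem browkin_periodic_of_alternating_norms
    (p : ℕ) [Fact p.Prime] (hp : Odd p)
    (α : ℚ_[p]) (hirr : ∀ q : ℚ, α ≠ (q : ℚ_[p]))
    (αs : ℕ → ℚ_[p]) (a : ℕ → ℚ) (hα0 : αs 0 = α) (hbcf : IsBCF p αs a)
    (δ : ℚ_[p]) (Δ : ℤ) (hδ : δ ^ 2 = (Δ : ℚ_[p])) (hΔ : ¬IsSquare Δ)
    (b c : ℕ → ℤ) (kk : ℕ → ℤ)
    (hrep : ∀ n, c n ≠ 0 ∧ ¬((p : ℤ) ∣ c n) ∧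
      αs n = ((b n : ℚ_[p]) + δ) / ((p : ℚ_[p]) ^ (kk n) * (c n : ℚ_[p])))
    (hΔpos : 0 < Δ) (t K : ℤ) (ht : t = Int.sqrt Δ)
    (hK : K = (2 * t + 1) * Δ + 1 - t * (t + 1) * (2 * t + 1) / 3)
    (n0 : ℕ) (hn0 : 0 < n0)
    (halt : ∀ n : ℕ, n0 ≤ n → (n : ℤ) ≤ (n0 : ℤ) + 2 * K →
      ((b n) ^ 2 - Δ) * ((b (n + 1)) ^ 2 - Δ) < 0) :
    ∃ m N : ℕ, 1 ≤ N ∧ (N : ℤ) ≤ 2 * K ∧ αs (m + N) = αs m :=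
  browkin_periodic_of_alternating_norms_general p αs a hbcf.isPadicCF δ Δ hδ hΔ b c kk
    (fun n => ⟨(hrep n).1, (hrep n).2.2⟩) hΔpos t K ht hK n0 halt
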